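/- Let ρ₀ : 𝔽₂ = ⟨a,b⟩ → PSL(2,ℝ) be a Schottky representation with ρ₀(a) = γ₁ and ρ₀(b) = γ₂ hyperbolic, and let L be the limit set of ρ₀(𝔽₂). Let φ₁, φ₂ be smooth circle diffeomorphisms restricting to the identity on L, and define ρ₁ : 𝔽₂ → Diff(S¹) by ρ₁(a) = φ₁⁻¹ γ₁ φ₁ and ρ₁(b) = φ₂⁻¹ γ₂ φ₂. Then ρ₁ is differentially Fuchsian if and only if φ₁ = φ₂. -/

import Mathlib

/-!
The proof of rigidity rests on `projective_of_conj`: a circle diffeomorphism `k` conjugating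
a Möbius map `B` to a hyperbolic Möbius map `A` is projective. In affine charts sending the
fixed points to `0` and `∞`, both maps are homotheties and `k` becomes a function `q` with
`q (b x) = a q x`, differentiable at `0` with nonzero derivative `d`. Differentiating at `0`
gives `a = b`, and `q x / x` is constant along orbits converging to `0`, so `q x = d x`.

If `h` conjugates `ρ₁` into `PSL(2, ℝ)`, this applies to each `φ i ∘ h`, which conjugates
`h⁻¹ ρ₁(of i) h` to `ρ₀(of i)`. Both maps `φ i ∘ h` agree with `h` on `h⁻¹ L`, an infinite
set, and two projective maps agreeing at three points coincide (`projective_ext`). Hence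
`φ 0 ∘ h = φ 1 ∘ h`, that is `φ 0 = φ 1`.

Conversely, if `φ 0 = φ 1` then `φ 0` conjugates `ρ₁` to `ρ₀`; the inverse diffeomorphism is
supplied by `isCircleDiffeo_symm`.
-/

noncomputable section

open Real Set Function MeasureTheory
open scoped Classical

/-- The circle, modeled as the real projective line `ℝP¹`. -/
abbrev RP1 : Type := Projectivization ℝ (Fin 2 → ℝ)

instance : TopologicalSpace RP1 :=
  inferInstanceAs (TopologicalSpace (Quotient (projectivizationSetoid ℝ (Fin 2 → ℝ))))

instance : MeasurableSpace RP1 := borel RP1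
instance : BorelSpace RP1 := ⟨rfl⟩

lemma cossin_ne_zero (t : ℝ) : ![Real.cos (π * t), Real.sin (π * t)] ≠ 0 := by
  intro h
  have h0 : Real.cos (π * t) = 0 := by simpa using congrFun h 0
  have h1 : Real.sin (π * t) = 0 := by simpa using congrFun h 1
  have h2 := Real.sin_sq_add_cos_sq (π * t)
  rw [h0, h1] at h2
  norm_num at h2

/-- The standard (angular) parametrization `ℝ → ℝP¹`; it has period `1` and realizes
the identification `S¹ = ℝ/ℤ ≃ ℝP¹`. -/
def para (t : ℝ) : RP1 :=
  Projectivization.mk ℝ ![Real.cos (π * t), Real.sin (π * t)] (cossin_ne_zero t)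

/-- `F : ℝ → ℝ` is a lift of the circle map `f` through the angular parametrization. -/
def IsLift (F : ℝ → ℝ) (f : RP1 → RP1) : Prop :=
  ∀ t : ℝ, f (para t) = para (F t)

/-- `f` is a `C^k` diffeomorphism of the circle: it admits a `C^k` lift of degree `±1`
with nowhere vanishing derivative. -/
def IsCircleDiffeo (k : ℕ∞) (f : RP1 → RP1) : Prop :=
  ∃ F : ℝ → ℝ, IsLift F f ∧ ContDiff ℝ k F ∧ (∀ t : ℝ, deriv F t ≠ 0) ∧
    ((∀ t : ℝ, F (t + 1) = F t + 1) ∨ (∀ t : ℝ, F (t + 1) = F t - 1))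

/-- `f` is a real-analytic diffeomorphism of the circle. -/
def IsAnalyticCircleDiffeo (f : RP1 → RP1) : Prop :=
  ∃ F : ℝ → ℝ, IsLift F f ∧ AnalyticOnNhd ℝ F Set.univ ∧ (∀ t : ℝ, deriv F t ≠ 0) ∧
    ((∀ t : ℝ, F (t + 1) = F t + 1) ∨ (∀ t : ℝ, F (t + 1) = F t - 1))

/-- The derivative of a circle map at a point, computed in the angular coordinate via a
differentiable lift. (Any two differentiable lifts differ by an integer constant, and the
derivative of a lift is `1`-periodic, so this does not depend on any choice.) -/
def circleDeriv (f : RP1 → RP1) (x : RP1) : ℝ :=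
  if h : ∃ F : ℝ → ℝ, IsLift F f ∧ Differentiable ℝ F
  then deriv h.choose (Function.invFun para x) else 0

/-- The `n`-th derivative of a smooth circle map at a point, in the angular coordinate. -/
def circleDerivN (n : ℕ) (f : RP1 → RP1) (x : RP1) : ℝ :=
  if h : ∃ F : ℝ → ℝ, IsLift F f ∧ ContDiff ℝ (⊤ : ℕ∞) F
  then iteratedDeriv n h.choose (Function.invFun para x) else 0

/-- The expression of a function on `S¹ × S¹` in the angular coordinates. -/
def chartDensity (ω : RP1 → RP1 → ℝ) : ℝ × ℝ → ℝ := fun q => ω (para q.1) (para q.2)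

/-- The lift to `ℝ × ℝ` of the complement of the diagonal in `S¹ × S¹`. -/
def offDiag2 : Set (ℝ × ℝ) := {q : ℝ × ℝ | para q.1 ≠ para q.2}

/-- A `C^k` volume form on the cylinder `C = S¹ × S¹ \ Δ`: a positive function of class
`C^k` (in the angular coordinates) off the diagonal. -/
def IsVolumeForm (k : ℕ∞) (ω : RP1 → RP1 → ℝ) : Prop :=
  (∀ x y : RP1, x ≠ y → 0 < ω x y) ∧ ContDiffOn ℝ k (chartDensity ω) offDiag2

/-- A real-analytic volume form on the cylinder `C = S¹ × S¹ \ Δ`. -/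
def IsAnalyticVolumeForm (ω : RP1 → RP1 → ℝ) : Prop :=
  (∀ x y : RP1, x ≠ y → 0 < ω x y) ∧ AnalyticOnNhd ℝ (chartDensity ω) offDiag2

/-- The circle diffeomorphism `f` preserves the volume form `ω` on the cylinder:
`ω (f x) (f y) · f'(x) · f'(y) = ω x y` for all `x ≠ y`. -/
def PreservesForm (f : RP1 → RP1) (ω : RP1 → RP1 → ℝ) : Prop :=
  ∀ x y : RP1, x ≠ y →
    ω (f x) (f y) * circleDeriv f x * circleDeriv f y = ω x y

abbrev SL2 : Type := Matrix.SpecialLinearGroup (Fin 2) ℝ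

/-- The projective action of `SL(2,ℝ)` on `ℝP¹`; its image in the maps of `ℝP¹`
is the group `PSL(2,ℝ)`. -/
def mobius (M : SL2) : RP1 → RP1 :=
  Projectivization.map (Matrix.SpecialLinearGroup.toLin' M : (Fin 2 → ℝ) →ₗ[ℝ] Fin 2 → ℝ)
    (Matrix.SpecialLinearGroup.toLin' M).injective

/-- `f` is an element of `PSL(2,ℝ)`, viewed as a self-map of the circle `ℝP¹`. -/
def IsMobius (f : RP1 → RP1) : Prop := ∃ M : SL2, f = mobius M

lemma rot_det (α : ℝ) :
    Matrix.det !![Real.cos (π * α), -Real.sin (π * α); Real.sin (π * α), Real.cos (π * α)] = 1 := by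
  rw [Matrix.det_fin_two_of]
  nlinarith [Real.sin_sq_add_cos_sq (π * α)]

/-- The rotation of angle `α` (in the angular coordinate of total length `1`), as an
element of `SL(2,ℝ)`: `mobius (rotSL α)` is the rotation `para t ↦ para (t + α)`. -/
def rotSL (α : ℝ) : SL2 :=
  ⟨!![Real.cos (π * α), -Real.sin (π * α); Real.sin (π * α), Real.cos (π * α)], rot_det α⟩

section Reps

variable {Γ : Type*} [Group Γ]

/-- The action `ρ` has no finite orbit on the circle. -/
def HasNoFiniteOrbit (ρ : Γ →* Equiv.Perm RP1) : Prop :=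
  ∀ x : RP1, (Set.range fun γ : Γ => ρ γ x).Infinite

/-- The action `ρ` has a dense orbit on the circle. -/
def HasDenseOrbit (ρ : Γ →* Equiv.Perm RP1) : Prop :=
  ∃ x : RP1, Dense (Set.range fun γ : Γ => ρ γ x)

/-- `L` is the limit set of the action `ρ`: the minimal nonempty closed invariant subset. -/
def IsLimitSet (ρ : Γ →* Equiv.Perm RP1) (L : Set RP1) : Prop :=
  L.Nonempty ∧ IsClosed L ∧ (∀ γ : Γ, (ρ γ) '' L = L) ∧
    ∀ L' : Set RP1, L'.Nonempty → IsClosed L' → (∀ γ : Γ, (ρ γ) '' L' = L') → L ⊆ L'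

/-- `ρ` is area-preserving: the diagonal action on the cylinder preserves a smooth
volume form. -/
def AreaPreserving (ρ : Γ →* Equiv.Perm RP1) : Prop :=
  ∃ ω : RP1 → RP1 → ℝ, IsVolumeForm (⊤ : ℕ∞) ω ∧ ∀ γ : Γ, PreservesForm (ρ γ) ω

/-- `ρ` is topologically Fuchsian: conjugate to a subgroup of `PSL(2,ℝ)` by a
homeomorphism of the circle. -/
def TopologicallyFuchsian (ρ : Γ →* Equiv.Perm RP1) : Prop :=
  ∃ h : RP1 ≃ₜ RP1, ∀ γ : Γ, IsMobius fun x => h.symm (ρ γ (h x))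

/-- `ρ` is differentially Fuchsian: conjugate to a subgroup of `PSL(2,ℝ)` by a `C^∞`
diffeomorphism of the circle. -/
def DifferentiallyFuchsian (ρ : Γ →* Equiv.Perm RP1) : Prop :=
  ∃ h g : RP1 → RP1, IsCircleDiffeo (⊤ : ℕ∞) h ∧ IsCircleDiffeo (⊤ : ℕ∞) g ∧
    (∀ x, g (h x) = x) ∧ (∀ x, h (g x) = x) ∧
    ∀ γ : Γ, IsMobius fun x => g (ρ γ (h x))

/-- `ρ` is analytically Fuchsian: conjugate to a subgroup of `PSL(2,ℝ)` by a real-analytic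
diffeomorphism of the circle. -/
def AnalyticallyFuchsian (ρ : Γ →* Equiv.Perm RP1) : Prop :=
  ∃ h g : RP1 → RP1, IsAnalyticCircleDiffeo h ∧ IsAnalyticCircleDiffeo g ∧
    (∀ x, g (h x) = x) ∧ (∀ x, h (g x) = x) ∧
    ∀ γ : Γ, IsMobius fun x => g (ρ γ (h x))

end Reps

/-- The "Lebesgue" measure on the circle, transported from `[0,1)` by the angular
parametrization. -/
def circleMeasure : Measure RP1 :=
  Measure.map para (volume.restrict (Set.Ico (0 : ℝ) 1))

/-- The measure on `S¹ × S¹` with density `ω` with respect to Lebesgue measure. -/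
def volumeFormMeasure (ω : RP1 → RP1 → ℝ) : Measure (RP1 × RP1) :=
  (circleMeasure.prod circleMeasure).withDensity fun q => ENNReal.ofReal (ω q.1 q.2)

-- extras appended to base
section Extra

open scoped UpperHalfPlane

/-- The affine chart `ℝ → ℝP¹`, `u ↦ [u : 1]`, realizing `S¹ = ℝ ∪ {∞}`. -/
def aff (u : ℝ) : RP1 :=
  Projectivization.mk ℝ ![u, (1 : ℝ)] (by
    intro h
    simpa using congrFun h 1)

/-- The curvature `K = (2/ω) ∂²(log ω)/∂x∂y` (in the angular coordinates) of the Lorentz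
metric associated to the volume form `ω` on the cylinder. -/
def curvature (ω : RP1 → RP1 → ℝ) (x y : RP1) : ℝ :=
  (2 / ω x y) *
    deriv (fun t : ℝ =>
        deriv (fun s : ℝ => Real.log (ω (para t) (para s))) (Function.invFun para y))
      (Function.invFun para x)

/-- The Schwarzian derivative of `f` (with respect to the standard projective structure of
`ℝP¹`) vanishes at `x`: `f` agrees to third order at `x` with some element of `PSL(2,ℝ)`. -/
def SchwarzianVanishesAt (f : RP1 → RP1) (x : RP1) : Prop :=
  ∃ M : SL2, f x = mobius M x ∧
    circleDerivN 1 f x = circleDerivN 1 (mobius M) x ∧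
    circleDerivN 2 f x = circleDerivN 2 (mobius M) x ∧
    circleDerivN 3 f x = circleDerivN 3 (mobius M) x

/-- The action on the hyperbolic plane of an element of `PSL(2,ℝ)`, given as a self-map of
the circle. (Well defined: matrices `±M` induce the same map on `ℝP¹` and on `ℍ`.) -/
def mobiusHAct (f : RP1 → RP1) : ℍ → ℍ :=
  if h : ∃ M : SL2, f = mobius M then fun z => h.choose • z else id

/-- A subset of the hyperbolic plane is (geodesically) convex iff it contains every point
lying between two of its points. -/
def HypConvex (C : Set ℍ) : Prop :=
  ∀ x ∈ C, ∀ y ∈ C, ∀ z : ℍ, dist x z + dist z y = dist x y → z ∈ C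

/-- A Cantor subset of the circle: nonempty, perfect, with empty interior. -/
def IsCantorSet (L : Set RP1) : Prop :=
  L.Nonempty ∧ Perfect L ∧ interior L = ∅

/-- `ρ` is a convex cocompact representation in `PSL(2,ℝ)`: it is injective, takes values in
`PSL(2,ℝ)`, is discrete (acts properly discontinuously on `ℍ`), its limit set is a Cantor
set, and it acts cocompactly on some nonempty closed convex invariant subset of `ℍ`
(equivalently, on the convex hull of its limit set). -/
def IsConvexCocompact {Γ : Type*} [Group Γ] (ρ : Γ →* Equiv.Perm RP1) : Prop :=
  Function.Injective ρ ∧ (∀ γ : Γ, IsMobius (ρ γ)) ∧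
  (∀ K : Set ℍ, IsCompact K →
    {γ : Γ | ((mobiusHAct (ρ γ) '' K) ∩ K).Nonempty}.Finite) ∧
  (∃ L : Set RP1, IsLimitSet ρ L) ∧
  (∀ L : Set RP1, IsLimitSet ρ L → IsCantorSet L) ∧
  ∃ C : Set ℍ, C.Nonempty ∧ IsClosed C ∧ HypConvex C ∧
    (∀ γ : Γ, mobiusHAct (ρ γ) '' C = C) ∧
    ∃ K : Set ℍ, IsCompact K ∧ C ⊆ ⋃ γ : Γ, mobiusHAct (ρ γ) '' K

/-- Two circle maps are `ε`-close in the `C¹` topology. -/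
def C1Close (f g : RP1 → RP1) (ε : ℝ) : Prop :=
  ∃ F G : ℝ → ℝ, IsLift F f ∧ IsLift G g ∧ ContDiff ℝ 1 F ∧ ContDiff ℝ 1 G ∧
    ∀ t : ℝ, |F t - G t| ≤ ε ∧ |deriv F t - deriv G t| ≤ ε

/-- `ρ` is spectrally Möbius-like: every nontrivial element has at most two fixed points,
and at a pair of fixed points `N, S` the derivatives satisfy `f'(N)·f'(S) = 1`, `f'(N) ≠ 1`. -/
def SpectrallyMobiusLike {Γ : Type*} [Group Γ] (ρ : Γ →* Equiv.Perm RP1) : Prop :=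
  ∀ γ : Γ, ρ γ ≠ 1 →
    {x : RP1 | ρ γ x = x}.encard ≤ 2 ∧
    ∀ N S : RP1, N ≠ S → {x : RP1 | ρ γ x = x} = {N, S} →
      circleDeriv (ρ γ) N * circleDeriv (ρ γ) S = 1 ∧ circleDeriv (ρ γ) N ≠ 1

end Extra

/-! ### Homogeneous coordinates on the projective line -/

/-- The area form of the plane; it vanishes exactly on pairs of collinear vectors. -/
def wedge (u v : Fin 2 → ℝ) : ℝ := u 0 * v 1 - u 1 * v 0

lemma mk_eq_mk_iff_wedge (u v : Fin 2 → ℝ) (hu : u ≠ 0) (hv : v ≠ 0) :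
    (Projectivization.mk ℝ u hu : RP1) = Projectivization.mk ℝ v hv ↔ wedge u v = 0 := by
  rw [Projectivization.mk_eq_mk_iff']
  constructor
  · rintro ⟨a, rfl⟩
    simp only [wedge, Pi.smul_apply, smul_eq_mul]
    ring
  · intro h
    unfold wedge at h
    by_cases h0 : v 0 = 0
    · have h1 : v 1 ≠ 0 := by
        intro h1
        apply hv
        ext i
        fin_cases i <;> simp [h0, h1]
      have hu0 : u 0 = 0 := by
        have : u 0 * v 1 = 0 := by rw [h0] at h; linarith
        simpa [h1] using this
      refine ⟨u 1 / v 1, ?_⟩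
      ext i
      fin_cases i <;> simp [h0, hu0, h1]
    · refine ⟨u 0 / v 0, ?_⟩
      ext i
      fin_cases i
      · simp [h0]
      · simp only [Fin.mk_one, Pi.smul_apply, smul_eq_mul]
        field_simp
        linarith

lemma ne_zero_left_of_wedge {u v : Fin 2 → ℝ} (h : wedge u v ≠ 0) : u ≠ 0 := by
  rintro rfl
  simp [wedge] at h

/-- The point of slope `x` with respect to the frame `(n, s)`: the inverse of the affine
chart of `ℝP¹ ∖ {[s]}` which sends `[n]` to `0`. -/
def slopePt (n s : Fin 2 → ℝ) (h : wedge n s ≠ 0) (x : ℝ) : RP1 :=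
  Projectivization.mk ℝ (n + x • s) (ne_zero_left_of_wedge (v := s) (by
    have : wedge (n + x • s) s = wedge n s := by
      simp only [wedge, Pi.add_apply, Pi.smul_apply, smul_eq_mul]
      ring
    rwa [this]))

lemma slopePt_inj {n s : Fin 2 → ℝ} {h : wedge n s ≠ 0} {x y : ℝ}
    (hxy : slopePt n s h x = slopePt n s h y) : x = y := by
  have h1 := (mk_eq_mk_iff_wedge _ _ _ _).1 hxy
  have h2 : wedge n s * (y - x) = 0 := by
    rw [← h1]
    simp only [wedge, Pi.add_apply, Pi.smul_apply, smul_eq_mul]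
    ring
  have h3 := (mul_eq_zero.1 h2).resolve_left h
  linarith

lemma mk_eq_slopePt {n s : Fin 2 → ℝ} (h : wedge n s ≠ 0) (v : Fin 2 → ℝ) (hv : v ≠ 0)
    (hvs : wedge v s ≠ 0) :
    (Projectivization.mk ℝ v hv : RP1) = slopePt n s h (wedge n v / wedge v s) := by
  refine (mk_eq_mk_iff_wedge _ _ _ _).2 ?_
  have h1 : wedge v (n + (wedge n v / wedge v s) • s)
      = wedge v n + wedge n v / wedge v s * wedge v s := by
    simp only [wedge, Pi.add_apply, Pi.smul_apply, smul_eq_mul]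
    ring
  rw [h1, div_mul_cancel₀ _ hvs]
  simp only [wedge]
  ring

lemma slopePt_ne {n s : Fin 2 → ℝ} (h : wedge n s ≠ 0) (hs : s ≠ 0) (x : ℝ) :
    slopePt n s h x ≠ Projectivization.mk ℝ s hs := by
  intro hx
  have h1 := (mk_eq_mk_iff_wedge _ _ _ _).1 hx
  apply h
  rw [← h1]
  simp only [wedge, Pi.add_apply, Pi.smul_apply, smul_eq_mul]
  ring

lemma exists_slopePt {n s : Fin 2 → ℝ} (h : wedge n s ≠ 0) (hs : s ≠ 0) (P : RP1)
    (hP : P ≠ Projectivization.mk ℝ s hs) : ∃ x, P = slopePt n s h x := by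
  induction P using Projectivization.ind with
  | h v hv =>
    have : wedge v s ≠ 0 := fun h0 => hP ((mk_eq_mk_iff_wedge _ _ _ _).2 h0)
    exact ⟨_, mk_eq_slopePt h v hv this⟩

/-! ### Möbius maps -/

lemma wedge_mulVec (A : SL2) (u v : Fin 2 → ℝ) :
    wedge (A.1.mulVec u) (A.1.mulVec v) = wedge u v := by
  have hd : A.1 0 0 * A.1 1 1 - A.1 0 1 * A.1 1 0 = 1 := by
    rw [← Matrix.det_fin_two]; exact A.2
  simp only [wedge, Matrix.mulVec, dotProduct, Fin.sum_univ_two]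
  linear_combination (u 0 * v 1 - u 1 * v 0) * hd

lemma mulVec_ne_zero (A : SL2) {v : Fin 2 → ℝ} (hv : v ≠ 0) : A.1.mulVec v ≠ 0 := by
  intro h
  apply hv
  apply (Matrix.SpecialLinearGroup.toLin' A).injective
  rw [map_zero, Matrix.SpecialLinearGroup.toLin'_apply]
  simpa using h

lemma mobius_mk (A : SL2) (v : Fin 2 → ℝ) (hv : v ≠ 0) :
    mobius A (Projectivization.mk ℝ v hv)
      = Projectivization.mk ℝ (A.1.mulVec v) (mulVec_ne_zero A hv) := by
  rfl

lemma exists_eigenvalue {A : SL2} {n : Fin 2 → ℝ} {hn : n ≠ 0}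
    (h : mobius A (Projectivization.mk ℝ n hn) = Projectivization.mk ℝ n hn) :
    ∃ α : ℝ, A.1.mulVec n = α • n := by
  rw [mobius_mk, Projectivization.mk_eq_mk_iff'] at h
  obtain ⟨a, ha⟩ := h
  exact ⟨a, ha.symm⟩

lemma eigenvalue_mul {A : SL2} {n s : Fin 2 → ℝ} (h : wedge n s ≠ 0) {α α' : ℝ}
    (hn : A.1.mulVec n = α • n) (hs : A.1.mulVec s = α' • s) : α * α' = 1 := by
  have h1 := wedge_mulVec A n s
  rw [hn, hs] at h1
  have h2 : (α * α' - 1) * wedge n s = 0 := by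
    simp only [wedge, Pi.smul_apply, smul_eq_mul] at h1 ⊢
    linear_combination h1
  have := (mul_eq_zero.1 h2).resolve_right h
  linarith

/-- A Möbius map fixing `[n]` and `[s]` is a homothety in the affine chart of the frame
`(n, s)`; its ratio is `α' ^ 2` because the two eigenvalues are inverse to each other. -/
lemma mobius_slopePt {A : SL2} {n s : Fin 2 → ℝ} (h : wedge n s ≠ 0) {α α' : ℝ}
    (hn : A.1.mulVec n = α • n) (hs : A.1.mulVec s = α' • s) (x : ℝ) :
    mobius A (slopePt n s h x) = slopePt n s h (α' ^ 2 * x) := by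
  have hαα := eigenvalue_mul h hn hs
  unfold slopePt
  rw [mobius_mk, mk_eq_mk_iff_wedge, Matrix.mulVec_add, Matrix.mulVec_smul, hn, hs]
  simp only [wedge, Pi.add_apply, Pi.smul_apply, smul_eq_mul]
  linear_combination (n 0 * s 1 - n 1 * s 0) * x * α' * hαα

/-! ### The angular parametrization -/

/-- The unit vector spanning the line `para t`. -/
def unitVec (t : ℝ) : Fin 2 → ℝ := ![Real.cos (π * t), Real.sin (π * t)]

lemma para_surjective (P : RP1) : ∃ t, P = para t := by
  induction P using Projectivization.ind with
  | h v hv =>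
    set z : ℂ := ⟨v 0, v 1⟩ with hz
    refine ⟨Complex.arg z / π, ?_⟩
    refine (mk_eq_mk_iff_wedge _ _ _ _).2 ?_
    have hπ : π * (Complex.arg z / π) = Complex.arg z := by
      field_simp
    have h0 : v 0 = ‖z‖ * Real.cos (Complex.arg z) := by
      rw [Complex.norm_mul_cos_arg]
    have h1 : v 1 = ‖z‖ * Real.sin (Complex.arg z) := by
      rw [Complex.norm_mul_sin_arg]
    simp only [wedge, hπ, Matrix.cons_val_zero, Matrix.cons_val_one]
    rw [h0, h1]
    ring

lemma hasStrictDerivAt_slope (t : ℝ) (s : Fin 2 → ℝ) (h : wedge (unitVec t) s ≠ 0) :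
    HasStrictDerivAt (fun u => wedge (unitVec t) (unitVec u) / wedge (unitVec u) s)
      (π / wedge (unitVec t) s) t := by
  have hl : HasStrictDerivAt (fun u : ℝ => π * u) π t := by
    simpa using (hasStrictDerivAt_id t).const_mul π
  have hc : HasStrictDerivAt (fun u : ℝ => Real.cos (π * u)) (-Real.sin (π * t) * π) t :=
    (Real.hasStrictDerivAt_cos (π * t)).comp t hl
  have hs : HasStrictDerivAt (fun u : ℝ => Real.sin (π * u)) (Real.cos (π * t) * π) t :=
    (Real.hasStrictDerivAt_sin (π * t)).comp t hl
  have hnum := (hs.const_mul (Real.cos (π * t))).sub (hc.const_mul (Real.sin (π * t)))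
  have hden := (hc.mul_const (s 1)).sub (hs.mul_const (s 0))
  have h' : Real.cos (π * t) * s 1 - Real.sin (π * t) * s 0 ≠ 0 := by
    simpa [wedge, unitVec] using h
  have hd := hnum.div hden h'
  have hval := Real.sin_sq_add_cos_sq (π * t)
  refine HasStrictDerivAt.congr_deriv hd ?_
  simp only [wedge, unitVec, Matrix.cons_val_zero, Matrix.cons_val_one, Pi.sub_apply]
  rw [div_eq_div_iff (pow_ne_zero 2 h') h']
  linear_combination
    (π * (Real.cos (π * t) * s 1 - Real.sin (π * t) * s 0) ^ 2) * hval

/-! ### Rigidity of conjugacies between hyperbolic Möbius maps -/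

/-- A function commuting with a homothety of ratio in `(0, 1)` and differentiable at its
fixed point is linear: the difference quotient is constant along an orbit converging
to `0`. -/
lemma linear_of_homothety_lt {q : ℝ → ℝ} {b d : ℝ} (hb0 : 0 < b) (hb1 : b < 1)
    (hq : ∀ x, q (b * x) = b * q x) (hd : HasDerivAt q d 0) (hq0 : q 0 = 0) (x : ℝ) :
    q x = d * x := by
  rcases eq_or_ne x 0 with rfl | hx
  · simp [hq0]
  have hpow : ∀ n : ℕ, q (b ^ n * x) = b ^ n * q x := by
    intro n
    induction n with
    | zero => simp
    | succ n ih => rw [pow_succ', mul_assoc, hq, ih, mul_assoc]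
  have hlim : Filter.Tendsto (fun n : ℕ => b ^ n * x) Filter.atTop (nhdsWithin 0 {0}ᶜ) := by
    refine tendsto_nhdsWithin_iff.2 ⟨?_, Filter.Eventually.of_forall fun n => ?_⟩
    · simpa using (tendsto_pow_atTop_nhds_zero_of_lt_one hb0.le hb1).mul_const x
    · exact mul_ne_zero (pow_ne_zero n hb0.ne') hx
  have h1 := (hasDerivAt_iff_tendsto_slope.1 hd).comp hlim
  have h2 : (slope q 0 ∘ fun n : ℕ => b ^ n * x) = fun _ => q x / x := by
    funext n
    have := pow_ne_zero n hb0.ne'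
    simp only [Function.comp, slope_def_field, hq0, hpow, sub_zero]
    field_simp
  rw [h2] at h1
  have h3 := tendsto_nhds_unique tendsto_const_nhds h1
  rw [← h3]
  field_simp

lemma linear_of_homothety {q : ℝ → ℝ} {b d : ℝ} (hb0 : 0 < b) (hb1 : b ≠ 1)
    (hq : ∀ x, q (b * x) = b * q x) (hd : HasDerivAt q d 0) (hq0 : q 0 = 0) (x : ℝ) :
    q x = d * x := by
  rcases lt_or_gt_of_ne hb1 with h | h
  · exact linear_of_homothety_lt hb0 h hq hd hq0 x
  · refine linear_of_homothety_lt (inv_pos.2 hb0) (inv_lt_one_of_one_lt₀ h) (fun y => ?_) hd hq0 x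
    have := hq (b⁻¹ * y)
    rw [mul_inv_cancel_left₀ hb0.ne'] at this
    rw [this, inv_mul_cancel_left₀ hb0.ne']

/-- A circle diffeomorphism conjugating a Möbius map `B` to a hyperbolic Möbius map `A` is
itself projective, induced by the linear map with columns `p` and `r`. In the charts
adapted to the fixed points, `A` and `B` are homotheties, the conjugacy `q` has nonzero
derivative at `0`, so the ratios agree and `q` commutes with a homothety. -/
lemma projective_of_conj (A B : SL2) (k : RP1 → RP1) (hk : Function.Bijective k)
    (F : ℝ → ℝ) (hF : IsLift F k) (hFd : Differentiable ℝ F) (hF0 : ∀ t, deriv F t ≠ 0)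
    (hc : ∀ x, k (mobius B x) = mobius A (k x)) (N S : RP1) (hNS : N ≠ S)
    (hfix : {x : RP1 | mobius A x = x} = {N, S}) :
    ∃ p r : Fin 2 → ℝ, ∀ (v : Fin 2 → ℝ) (hv : v ≠ 0),
      ∃ hw : v 0 • p + v 1 • r ≠ 0,
        k (Projectivization.mk ℝ v hv) = Projectivization.mk ℝ (v 0 • p + v 1 • r) hw := by
  have hAN : mobius A N = N := by
    have : N ∈ {x : RP1 | mobius A x = x} := by rw [hfix]; simp
    exact this
  have hAS : mobius A S = S := by
    have : S ∈ {x : RP1 | mobius A x = x} := by rw [hfix]; simp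
    exact this
  obtain ⟨N', hN'⟩ := hk.2 N
  obtain ⟨S', hS'⟩ := hk.2 S
  have hBN : mobius B N' = N' := hk.1 (by rw [hc, hN', hAN])
  have hBS : mobius B S' = S' := hk.1 (by rw [hc, hS', hAS])
  have hNS' : N' ≠ S' := by
    rintro rfl
    exact hNS (hN'.symm.trans hS')
  obtain ⟨t, rfl⟩ := para_surjective N'
  obtain rfl : N = para (F t) := by rw [← hN', hF]
  obtain ⟨σ', rfl⟩ := para_surjective S'
  obtain ⟨σ, rfl⟩ := para_surjective S
  have hw : wedge (unitVec (F t)) (unitVec σ) ≠ 0 := fun h0 =>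
    hNS ((mk_eq_mk_iff_wedge _ _ _ _).2 h0)
  have hw' : wedge (unitVec t) (unitVec σ') ≠ 0 := fun h0 =>
    hNS' ((mk_eq_mk_iff_wedge _ _ _ _).2 h0)
  obtain ⟨α, hα⟩ := exists_eigenvalue hAN
  obtain ⟨α', hα'⟩ := exists_eigenvalue hAS
  obtain ⟨β, hβ⟩ := exists_eigenvalue hBN
  obtain ⟨β', hβ'⟩ := exists_eigenvalue hBS
  have hA := mobius_slopePt hw hα hα'
  have hB := mobius_slopePt hw' hβ hβ'
  have hββ : β * β' = 1 := eigenvalue_mul hw' hβ hβ'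
  have hb0 : 0 < β' ^ 2 := by
    have : β' ≠ 0 := by rintro rfl; simp at hββ
    positivity
  have hk' : ∀ x, ∃ y, k (slopePt _ _ hw' x) = slopePt _ _ hw y := by
    intro x
    refine exists_slopePt hw (cossin_ne_zero σ) _ fun h0 => ?_
    exact slopePt_ne hw' (cossin_ne_zero σ') x (hk.1 (h0.trans hS'.symm))
  choose q hq using hk'
  have hq0 : q 0 = 0 := by
    have h1 : slopePt _ _ hw' 0 = para t := by
      refine (mk_eq_mk_iff_wedge _ _ _ _).2 ?_
      simp [wedge, unitVec]
      ring
    have h2 : slopePt _ _ hw 0 = para (F t) := by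
      refine (mk_eq_mk_iff_wedge _ _ _ _).2 ?_
      simp [wedge, unitVec]
      ring
    apply slopePt_inj (h := hw)
    rw [← hq, h1, h2, hF]
  have hrel : ∀ x, q (β' ^ 2 * x) = α' ^ 2 * q x := by
    intro x
    apply slopePt_inj (h := hw)
    rw [← hq, ← hB, hc, hq, hA]
  -- If `B` had ratio `1` it would be the identity, and `A` would fix the whole circle.
  have hb1 : β' ^ 2 ≠ 1 := by
    intro h1
    have h2 : slopePt _ _ hw (q 1) ∈ {x : RP1 | mobius A x = x} := by
      change mobius A _ = _
      rw [← hq, ← hc, hB, h1, one_mul]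
    rw [hfix] at h2
    rcases h2 with h2 | h2
    · rw [← hN', ← hq] at h2
      have h3 := (mk_eq_mk_iff_wedge _ _ _ _).1 (hk.1 h2)
      apply hw'
      simp only [wedge, unitVec, Pi.add_apply, Pi.smul_apply, smul_eq_mul] at h3 ⊢
      linear_combination -h3
    · exact slopePt_ne hw (cossin_ne_zero σ) _ h2
  -- `q` is read off from the lift `F` through the slope functions at `t` and at `F t`.
  have hp := hasStrictDerivAt_slope t (unitVec σ') hw'
  have hr := hasStrictDerivAt_slope (F t) (unitVec σ) hw
  have hp0 : π / wedge (unitVec t) (unitVec σ') ≠ 0 := div_ne_zero Real.pi_ne_zero hw'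
  have hr0 : π / wedge (unitVec (F t)) (unitVec σ) ≠ 0 := div_ne_zero Real.pi_ne_zero hw
  have hpt : wedge (unitVec t) (unitVec t) / wedge (unitVec t) (unitVec σ') = 0 := by
    simp [wedge, mul_comm]
  obtain ⟨d, hd0, hd⟩ : ∃ d, d ≠ 0 ∧ HasDerivAt q d 0 := by
    set p : ℝ → ℝ := fun u => wedge (unitVec t) (unitVec u) / wedge (unitVec u) (unitVec σ')
      with hpdef
    set τ := hp.localInverse p _ t hp0 with hτ
    replace hpt : p t = 0 := hpt
    have hτd : HasDerivAt τ (π / wedge (unitVec t) (unitVec σ'))⁻¹ 0 := by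
      have := (hp.to_localInverse hp0).hasDerivAt
      rwa [hpt] at this
    have hτr : ∀ᶠ x in nhds 0, p (τ x) = x := by
      have := hp.eventually_right_inverse hp0
      rwa [hpt] at this
    have hτ0 : τ 0 = t := by
      have := (hp.eventually_left_inverse hp0).self_of_nhds
      rwa [hpt] at this
    have hcont : Filter.Tendsto τ (nhds 0) (nhds t) := by
      have := hτd.continuousAt.tendsto
      rwa [hτ0] at this
    have hne' : ∀ᶠ u in nhds t, wedge (unitVec u) (unitVec σ') ≠ 0 := by
      have hcw : Continuous fun u => wedge (unitVec u) (unitVec σ') := by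
        unfold wedge unitVec
        simp only [Matrix.cons_val_zero, Matrix.cons_val_one]
        fun_prop
      exact hcw.continuousAt.eventually_ne hw'
    have hne : ∀ᶠ u in nhds t, wedge (unitVec (F u)) (unitVec σ) ≠ 0 := by
      have hcF := hFd.continuous
      have hcw : Continuous fun u => wedge (unitVec (F u)) (unitVec σ) := by
        unfold wedge unitVec
        simp only [Matrix.cons_val_zero, Matrix.cons_val_one]
        fun_prop
      exact hcw.continuousAt.eventually_ne hw
    have hcomp := (HasDerivAt.comp t hr.hasDerivAt (hFd t).hasDerivAt)
    rw [← hτ0] at hcomp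
    have hcomp2 := HasDerivAt.comp 0 hcomp hτd
    rw [hτ0] at hcomp2
    refine ⟨_, ?_, hcomp2.congr_of_eventuallyEq ?_⟩
    · exact mul_ne_zero (mul_ne_zero hr0 (hF0 t)) (inv_ne_zero hp0)
    · filter_upwards [hτr, hcont.eventually hne', hcont.eventually hne] with x hx1 hx2 hx3
      apply slopePt_inj (h := hw)
      rw [← hq]
      have h1 : para (τ x) = slopePt _ _ hw' x := by
        calc para (τ x) = slopePt _ _ hw' (p (τ x)) :=
              mk_eq_slopePt hw' _ (cossin_ne_zero (τ x)) hx2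
          _ = slopePt _ _ hw' x := by rw [hx1]
      rw [← h1, hF]
      exact mk_eq_slopePt hw _ (cossin_ne_zero (F (τ x))) hx3
  have hab : β' ^ 2 = α' ^ 2 := by
    have h1 : HasDerivAt (fun x => q (β' ^ 2 * x)) (d * (β' ^ 2)) 0 := by
      have hl : HasDerivAt (fun x : ℝ => β' ^ 2 * x) (β' ^ 2) 0 := by
        simpa using (hasDerivAt_id (0 : ℝ)).const_mul (β' ^ 2)
      have hd' : HasDerivAt q d (β' ^ 2 * 0) := by simpa using hd
      exact hd'.comp (0 : ℝ) hl
    have h2 : HasDerivAt (fun x => q (β' ^ 2 * x)) (α' ^ 2 * d) 0 := by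
      simp only [hrel]
      exact hd.const_mul _
    have h3 := h1.unique h2
    rw [mul_comm] at h3
    exact mul_right_cancel₀ hd0 h3
  have hlin : ∀ x, q x = d * x :=
    linear_of_homothety hb0 hb1 (fun x => by rw [hrel, hab]) hd hq0
  -- The linear map is `v ↦ (v ∧ s') n + d (n' ∧ v) s`, with `n, s, n', s'` spanning the
  -- fixed lines of `A` and `B`.
  refine ⟨(unitVec σ' 1) • unitVec (F t) - (d * unitVec t 1) • unitVec σ,
    -(unitVec σ' 0) • unitVec (F t) + (d * unitVec t 0) • unitVec σ, ?_⟩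
  intro v hv
  have hform : v 0 • ((unitVec σ' 1) • unitVec (F t) - (d * unitVec t 1) • unitVec σ)
      + v 1 • (-(unitVec σ' 0) • unitVec (F t) + (d * unitVec t 0) • unitVec σ)
      = wedge v (unitVec σ') • unitVec (F t) + (d * wedge (unitVec t) v) • unitVec σ := by
    ext i
    simp only [wedge, Pi.add_apply, Pi.sub_apply, Pi.smul_apply, smul_eq_mul]
    ring
  rw [hform]
  have hnz : wedge v (unitVec σ') • unitVec (F t) + (d * wedge (unitVec t) v) • unitVec σ ≠ 0 := by
    intro h0
    have e0 := congrFun h0 0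
    have e1 := congrFun h0 1
    simp only [Pi.add_apply, Pi.smul_apply, smul_eq_mul, Pi.zero_apply] at e0 e1
    have h1 : wedge v (unitVec σ') * wedge (unitVec (F t)) (unitVec σ) = 0 := by
      rw [wedge.eq_1 (unitVec (F t))]
      linear_combination unitVec σ 1 * e0 - unitVec σ 0 * e1
    have h2 : (d * wedge (unitVec t) v) * wedge (unitVec (F t)) (unitVec σ) = 0 := by
      rw [wedge.eq_1 (unitVec (F t))]
      linear_combination unitVec (F t) 0 * e1 - unitVec (F t) 1 * e0
    have h3 := (mul_eq_zero.1 h1).resolve_right hw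
    have h4 := (mul_eq_zero.1 ((mul_eq_zero.1 h2).resolve_right hw)).resolve_left hd0
    apply hNS'
    calc para t = Projectivization.mk ℝ v hv := (mk_eq_mk_iff_wedge _ _ _ _).2 h4
      _ = para σ' := (mk_eq_mk_iff_wedge _ _ _ _).2 h3
  refine ⟨hnz, ?_⟩
  by_cases hvs : wedge v (unitVec σ') = 0
  · have h1 : Projectivization.mk ℝ v hv = para σ' := (mk_eq_mk_iff_wedge _ _ _ _).2 hvs
    rw [h1, hS']
    refine (mk_eq_mk_iff_wedge _ _ _ _).2 ?_
    rw [hvs]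
    simp only [wedge, unitVec, Pi.add_apply, Pi.smul_apply, smul_eq_mul]
    ring
  · rw [mk_eq_slopePt hw' v hv hvs, hq, hlin]
    refine (mk_eq_mk_iff_wedge _ _ _ _).2 ?_
    set a := wedge v (unitVec σ')
    set c := wedge (unitVec t) v
    simp only [wedge, Pi.add_apply, Pi.smul_apply, smul_eq_mul]
    field_simp
    ring

/-! ### Projective maps agreeing at three points -/

/-- A binary quadratic form with three distinct projective zeros vanishes (Vandermonde). -/
lemma quadratic_eq_zero {a b c : ℝ} (u v w : Fin 2 → ℝ)
    (huv : wedge u v ≠ 0) (huw : wedge u w ≠ 0) (hvw : wedge v w ≠ 0)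
    (hu : a * u 0 ^ 2 + b * (u 0 * u 1) + c * u 1 ^ 2 = 0)
    (hv : a * v 0 ^ 2 + b * (v 0 * v 1) + c * v 1 ^ 2 = 0)
    (hw : a * w 0 ^ 2 + b * (w 0 * w 1) + c * w 1 ^ 2 = 0) :
    a = 0 ∧ b = 0 ∧ c = 0 := by
  have hD : wedge u v * wedge u w * wedge v w ≠ 0 :=
    mul_ne_zero (mul_ne_zero huv huw) hvw
  refine ⟨?_, ?_, ?_⟩ <;> refine (mul_eq_zero.1 ?_).resolve_left hD <;> unfold wedge
  · linear_combination (v 0 * v 1 * w 1 ^ 2 - v 1 ^ 2 * w 0 * w 1) * hu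
      - (u 0 * u 1 * w 1 ^ 2 - u 1 ^ 2 * w 0 * w 1) * hv
      + (u 0 * u 1 * v 1 ^ 2 - u 1 ^ 2 * v 0 * v 1) * hw
  · linear_combination -(v 0 ^ 2 * w 1 ^ 2 - v 1 ^ 2 * w 0 ^ 2) * hu
      + (u 0 ^ 2 * w 1 ^ 2 - u 1 ^ 2 * w 0 ^ 2) * hv
      - (u 0 ^ 2 * v 1 ^ 2 - u 1 ^ 2 * v 0 ^ 2) * hw
  · linear_combination (v 0 ^ 2 * w 0 * w 1 - v 0 * v 1 * w 0 ^ 2) * hu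
      - (u 0 ^ 2 * w 0 * w 1 - u 0 * u 1 * w 0 ^ 2) * hv
      + (u 0 ^ 2 * v 0 * v 1 - u 0 * u 1 * v 0 ^ 2) * hw

lemma projective_ext {k k' : RP1 → RP1} {p r p' r' : Fin 2 → ℝ}
    (hk : ∀ (v : Fin 2 → ℝ) (hv : v ≠ 0), ∃ hw : v 0 • p + v 1 • r ≠ 0,
        k (Projectivization.mk ℝ v hv) = Projectivization.mk ℝ (v 0 • p + v 1 • r) hw)
    (hk' : ∀ (v : Fin 2 → ℝ) (hv : v ≠ 0), ∃ hw : v 0 • p' + v 1 • r' ≠ 0,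
        k' (Projectivization.mk ℝ v hv) = Projectivization.mk ℝ (v 0 • p' + v 1 • r') hw)
    {x y z : RP1} (hxy : x ≠ y) (hxz : x ≠ z) (hyz : y ≠ z)
    (hx : k x = k' x) (hy : k y = k' y) (hz : k z = k' z) : k = k' := by
  have hiff : ∀ (v : Fin 2 → ℝ) (hv : v ≠ 0),
      k (Projectivization.mk ℝ v hv) = k' (Projectivization.mk ℝ v hv) ↔
        wedge p p' * v 0 ^ 2 + (wedge p r' + wedge r p') * (v 0 * v 1)
          + wedge r r' * v 1 ^ 2 = 0 := by
    intro v hv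
    obtain ⟨h1, e1⟩ := hk v hv
    obtain ⟨h2, e2⟩ := hk' v hv
    rw [e1, e2, mk_eq_mk_iff_wedge]
    have : wedge (v 0 • p + v 1 • r) (v 0 • p' + v 1 • r')
        = wedge p p' * v 0 ^ 2 + (wedge p r' + wedge r p') * (v 0 * v 1)
          + wedge r r' * v 1 ^ 2 := by
      simp only [wedge, Pi.add_apply, Pi.smul_apply, smul_eq_mul]
      ring
    rw [this]
  induction x using Projectivization.ind with
  | h u hu =>
  induction y using Projectivization.ind with
  | h v hv =>
  induction z using Projectivization.ind with
  | h w hw =>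
  rw [ne_eq, mk_eq_mk_iff_wedge] at hxy hxz hyz
  obtain ⟨ha, hb, hc⟩ := quadratic_eq_zero u v w hxy hxz hyz
    ((hiff u hu).1 hx) ((hiff v hv).1 hy) ((hiff w hw).1 hz)
  funext P
  induction P using Projectivization.ind with
  | h v hv => exact (hiff v hv).2 (by rw [ha, hb, hc]; ring)

instance : T1Space RP1 := by
  refine ⟨fun P => ?_⟩
  induction P using Projectivization.ind with
  | h v hv =>
    have hq : Topology.IsQuotientMap
        (fun u : {u : Fin 2 → ℝ // u ≠ 0} => (Projectivization.mk ℝ u.1 u.2 : RP1)) :=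
      isQuotientMap_quot_mk
    rw [← hq.isClosed_preimage]
    have : (fun u : {u : Fin 2 → ℝ // u ≠ 0} => (Projectivization.mk ℝ u.1 u.2 : RP1)) ⁻¹'
        {Projectivization.mk ℝ v hv} = {u | wedge u.1 v = 0} := by
      ext u
      simp [mk_eq_mk_iff_wedge]
    rw [this]
    refine isClosed_eq ?_ continuous_const
    have hcoord : ∀ i : Fin 2, Continuous fun u : {u : Fin 2 → ℝ // u ≠ 0} => u.1 i :=
      fun i => (continuous_apply i).comp continuous_subtype_val
    exact ((hcoord 0).mul continuous_const).sub ((hcoord 1).mul continuous_const)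

/-! ### Inverting circle diffeomorphisms -/

lemma exists_smooth_inverse {F : ℝ → ℝ} (hF : ContDiff ℝ (⊤ : ℕ∞) F)
    (hF0 : ∀ t, deriv F t ≠ 0) (hF1 : ∀ t, F (t + 1) = F t + 1) :
    ∃ G : ℝ → ℝ, (∀ t, F (G t) = t) ∧ ContDiff ℝ (⊤ : ℕ∞) G ∧ (∀ t, deriv G t ≠ 0) ∧
      ∀ t, G (t + 1) = G t + 1 := by
  have hd : Differentiable ℝ F := hF.differentiable (by simp)
  have hmono : StrictMono F := by
    rcases hasDerivWithinAt_forall_lt_or_forall_gt_of_forall_ne (convex_univ (𝕜 := ℝ))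
      (f := F) (f' := deriv F) (m := 0) (fun x _ => (hd x).hasDerivAt.hasDerivWithinAt)
      (fun x _ => hF0 x) with h | h
    · have hanti : StrictAnti F := strictAnti_of_deriv_neg fun x => h x trivial
      have h1 := hanti (show (0 : ℝ) < 0 + 1 by norm_num)
      rw [hF1] at h1
      linarith
    · exact strictMono_of_deriv_pos fun x => h x trivial
  have hnat : ∀ (n : ℕ) (t : ℝ), F (t + n) = F t + n := by
    intro n t
    induction n with
    | zero => simp
    | succ n ih => push_cast; rw [← add_assoc, hF1, ih, add_assoc]
  have hsurj : Function.Surjective F := by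
    intro y
    obtain ⟨n, hn⟩ := exists_nat_gt |y - F 0|
    rw [abs_lt] at hn
    have h1 := hnat n 0
    have h2 := hnat n (-n)
    rw [zero_add] at h1
    rw [neg_add_cancel] at h2
    have h3 := mem_range_of_exists_le_of_exists_ge hd.continuous
      (c := y) ⟨-n, by linarith⟩ ⟨n, by linarith⟩
    exact h3
  set e : ℝ ≃ₜ ℝ := (hmono.orderIsoOfSurjective F hsurj).toHomeomorph with he
  have heF : ∀ t, e t = F t := fun t => rfl
  have hFe : ∀ t, F (e.symm t) = t := fun t => by rw [← heF]; exact e.apply_symm_apply t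
  have hsm : ContDiff ℝ (⊤ : ℕ∞) (e.symm : ℝ → ℝ) :=
    e.contDiff_symm_deriv hF0 (fun x => (hd x).hasDerivAt) hF
  have hsd : Differentiable ℝ (e.symm : ℝ → ℝ) := hsm.differentiable (by simp)
  refine ⟨e.symm, hFe, hsm, fun t h0 => ?_, fun t => ?_⟩
  · have h1 := HasDerivAt.comp t (hd (e.symm t)).hasDerivAt (hsd t).hasDerivAt
    have h2 : (F ∘ e.symm) = id := funext hFe
    rw [h2, h0, mul_zero] at h1
    exact zero_ne_one (h1.unique (hasDerivAt_id t))
  · apply hmono.injective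
    rw [hFe, hF1, hFe]

lemma isCircleDiffeo_symm (f : Equiv.Perm RP1) (hf : IsCircleDiffeo (⊤ : ℕ∞) f) :
    IsCircleDiffeo (⊤ : ℕ∞) (f.symm) := by
  obtain ⟨F, hl, hs, h0, h1⟩ := hf
  have hlift : ∀ G : ℝ → ℝ, (∀ t, F (G t) = t) → IsLift G f.symm := by
    intro G hG t
    rw [Equiv.symm_apply_eq, hl, hG]
  rcases h1 with h1 | h1
  · obtain ⟨G, g1, g2, g3, g4⟩ := exists_smooth_inverse hs h0 h1
    exact ⟨G, hlift G g1, g2, g3, Or.inl g4⟩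
  · -- In degree `-1` the inverse of `F` is `t ↦ G (-t)`, with `G` the inverse of `-F`.
    obtain ⟨G, g1, g2, g3, g4⟩ := exists_smooth_inverse (F := fun t => -F t) hs.neg
      (fun t => by rw [deriv.fun_neg]; exact neg_ne_zero.2 (h0 t))
      (fun t => by rw [h1]; ring)
    refine ⟨fun t => G (-t), hlift _ fun t => ?_, g2.comp contDiff_neg, fun t => ?_,
      Or.inr fun t => ?_⟩
    · have := g1 (-t)
      linarith
    · rw [deriv_comp_neg]
      exact neg_ne_zero.2 (g3 _)
    · have := g4 (-(t + 1))
      rw [show -(t + 1) + 1 = -t by ring] at this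
      linarith

/-- Let `ρ₀` be a Schottky representation of `𝔽₂` with hyperbolic generators `γ₁, γ₂` and
limit set `L`, and let `φ₁, φ₂` be smooth circle diffeomorphisms equal to the identity on
`L`. The representation `ρ₁` with `ρ₁(a) = φ₁⁻¹ γ₁ φ₁` and `ρ₁(b) = φ₂⁻¹ γ₂ φ₂` is
differentially Fuchsian if and only if `φ₁ = φ₂`. -/
theorem stmt_19 (ρ₀ : FreeGroup (Fin 2) →* Equiv.Perm RP1)
    (hmob : ∀ γ : FreeGroup (Fin 2), IsMobius (ρ₀ γ))
    (hinj : Function.Injective ρ₀)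
    (hdisc : ∀ K : Set UpperHalfPlane, IsCompact K →
      {γ : FreeGroup (Fin 2) | ((mobiusHAct (ρ₀ γ) '' K) ∩ K).Nonempty}.Finite)
    (hhyp : ∀ i : Fin 2, ∃ N S : RP1, N ≠ S ∧
      {x : RP1 | ρ₀ (FreeGroup.of i) x = x} = {N, S})
    (L : Set RP1) (hL : IsLimitSet ρ₀ L) (hCantor : IsCantorSet L)
    (φ : Fin 2 → Equiv.Perm RP1)
    (hφdiff : ∀ i : Fin 2, IsCircleDiffeo (⊤ : ℕ∞) ⇑(φ i))
    (hφid : ∀ i : Fin 2, ∀ x ∈ L, φ i x = x)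
    (ρ₁ : FreeGroup (Fin 2) →* Equiv.Perm RP1)
    (hρ₁ : ∀ i : Fin 2, ρ₁ (FreeGroup.of i) = (φ i)⁻¹ * ρ₀ (FreeGroup.of i) * φ i)
    (hρ₁diff : ∀ γ : FreeGroup (Fin 2), IsCircleDiffeo (⊤ : ℕ∞) (ρ₁ γ)) :
    DifferentiallyFuchsian ρ₁ ↔ φ 0 = φ 1 := by
  constructor
  · rintro ⟨h, g, ⟨H, hHl, hHs, hH0, -⟩, -, hgh, hhg, hM⟩
    have hhbij : Function.Bijective h :=
      ⟨Function.LeftInverse.injective hgh, Function.RightInverse.surjective hhg⟩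
    -- Each `φ i ∘ h` conjugates a Möbius map to the hyperbolic `ρ₀ (of i)`.
    have hproj : ∀ i : Fin 2, ∃ p r : Fin 2 → ℝ, ∀ (v : Fin 2 → ℝ) (hv : v ≠ 0),
        ∃ hw : v 0 • p + v 1 • r ≠ 0, (fun x => φ i (h x)) (Projectivization.mk ℝ v hv)
          = Projectivization.mk ℝ (v 0 • p + v 1 • r) hw := by
      intro i
      obtain ⟨A, hA⟩ := hmob (FreeGroup.of i)
      obtain ⟨B, hB⟩ := hM (FreeGroup.of i)
      obtain ⟨N, S, hNS, hfix⟩ := hhyp i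
      obtain ⟨F, hFl, hFs, hF0, -⟩ := hφdiff i
      have hFd : Differentiable ℝ F := hFs.differentiable (by simp)
      have hHd : Differentiable ℝ H := hHs.differentiable (by simp)
      refine projective_of_conj A B (fun x => φ i (h x)) ((φ i).bijective.comp hhbij)
        (fun t => F (H t)) (fun t => ?_) (hFd.comp hHd) (fun t => ?_) (fun x => ?_) N S hNS ?_
      · simp only [hHl t, hFl (H t)]
      · have := (HasDerivAt.comp t (hFd (H t)).hasDerivAt (hHd t).hasDerivAt).deriv
        change deriv (F ∘ H) t ≠ 0
        rw [this]
        exact mul_ne_zero (hF0 _) (hH0 _)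
      · have h1 := congrFun hB x
        rw [← h1, ← hA]
        simp [hhg, hρ₁, Equiv.Perm.mul_apply]
      · rw [← hA]
        exact hfix
    obtain ⟨x₀, hx₀⟩ := hCantor.1
    have hinf : L.Infinite := Set.Infinite.of_accPt (hCantor.2.1.acc x₀ hx₀)
    obtain ⟨s, hsL, hs3⟩ := hinf.exists_subset_card_eq 3
    obtain ⟨x, y, z, hxy, hxz, hyz, rfl⟩ := Finset.card_eq_three.1 hs3
    have hxL : x ∈ L := hsL (by simp)
    have hyL : y ∈ L := hsL (by simp)
    have hzL : z ∈ L := hsL (by simp)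
    have hginj : Function.Injective g := Function.LeftInverse.injective hhg
    have hagree : ∀ w ∈ L, φ 0 (h (g w)) = φ 1 (h (g w)) := by
      intro w hw
      rw [hhg, hφid 0 w hw, hφid 1 w hw]
    obtain ⟨p, r, hpr⟩ := hproj 0
    obtain ⟨p', r', hpr'⟩ := hproj 1
    have heq := projective_ext (k := fun x => φ 0 (h x)) (k' := fun x => φ 1 (h x)) hpr hpr' (hginj.ne hxy) (hginj.ne hxz) (hginj.ne hyz)
      (hagree x hxL) (hagree y hyL) (hagree z hzL)
    ext w
    have := congrFun heq (g w)
    simpa only [hhg] using this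
  · intro heq
    have hconj : ∀ γ, ρ₁ γ = (φ 0)⁻¹ * ρ₀ γ * φ 0 := by
      have hhom : ρ₁ = (MulAut.conj (φ 0)⁻¹).toMonoidHom.comp ρ₀ := by
        ext1 i
        fin_cases i
        · simpa using hρ₁ 0
        · simpa [heq] using hρ₁ 1
      intro γ
      rw [hhom]
      simp
    refine ⟨(φ 0).symm, φ 0, isCircleDiffeo_symm _ (hφdiff 0), hφdiff 0, by simp, by simp, ?_⟩
    intro γ
    obtain ⟨M, hM⟩ := hmob γ
    refine ⟨M, ?_⟩
    rw [← hM]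
    funext x
    simp [hconj, Equiv.Perm.mul_apply]

end
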